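/- The τ-function satisfies τ̃ = W_δ·τ, τ̂ = W_ε·τ, and τ̄ = W_λ·τ, where W_δ = 1 − sᵀ(χ_{δ,K′}(ξ))^{−1}C(1+MC)^{−1}r, and W_ε, W_λ are defined analogously with δ replaced by ε, λ. -/

import Mathlib

open scoped BigOperators

noncomputable section

/-- A period lattice in `ℂ` spanned by two `ℝ`-independent periods. -/
structure EllLattice where
  ω₁ : ℂ
  ω₂ : ℂ
  indep : ∀ a b : ℝ, a • ω₁ + b • ω₂ = 0 → a = 0 ∧ b = 0

namespace EllLattice

/-- Membership in the lattice `Λ = ℤω₁ + ℤω₂`. -/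
def mem (L : EllLattice) (z : ℂ) : Prop := ∃ m n : ℤ, z = m • L.ω₁ + n • L.ω₂

/-- The lattice point with integer coordinates `p = (m, n)`. -/
def per (L : EllLattice) (p : ℤ × ℤ) : ℂ := p.1 • L.ω₁ + p.2 • L.ω₂

/-- The Weierstrass sigma function associated to the lattice, defined by its
Hadamard product over the nonzero lattice points. -/
def sigma (L : EllLattice) (z : ℂ) : ℂ :=
  z * ∏' p : {p : ℤ × ℤ // p ≠ 0},
      ((1 - z / L.per p.1) *
        Complex.exp (z / L.per p.1 + z ^ 2 / (2 * (L.per p.1) ^ 2)))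

/-- The Weierstrass zeta function `ζ = σ′/σ`. -/
def zeta (L : EllLattice) (z : ℂ) : ℂ := deriv L.sigma z / L.sigma z

/-- The Weierstrass `℘`-function `℘ = −ζ′`. -/
def wp (L : EllLattice) (z : ℂ) : ℂ := - deriv L.zeta z

/-- `Φ_ξ(κ) = σ(ξ+κ)/(σ(ξ)σ(κ))`. -/
def Phi (L : EllLattice) (ξ κ : ℂ) : ℂ := L.sigma (ξ + κ) / (L.sigma ξ * L.sigma κ)

/-- The Lamé function `Ψ_ξ(κ) = Φ_ξ(κ)·e^{−ζ(ξ)κ}`. -/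
def Psi (L : EllLattice) (ξ κ : ℂ) : ℂ := L.Phi ξ κ * Complex.exp (-(L.zeta ξ) * κ)

/-- `η_δ(ξ) = ζ(ξ+δ) − ζ(ξ) − ζ(δ)`. -/
def eta (L : EllLattice) (δ ξ : ℂ) : ℂ := L.zeta (ξ + δ) - L.zeta ξ - L.zeta δ

/-- `χ_{α,β}(ξ) = ζ(α) + ζ(β) + ζ(ξ) − ζ(ξ+α+β)`. -/
def chi (L : EllLattice) (α β ξ : ℂ) : ℂ :=
  L.zeta α + L.zeta β + L.zeta ξ - L.zeta (ξ + α + β)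

end EllLattice

open Matrix

/-- All the data entering the elliptic (N,N′)-soliton solutions of the lattice KP system:
a period lattice, lattice parameters `δ, ε, λ`, a base point `ξ₀`, rapidity parameters
`κ_i, κ′_j`, initial plane-wave constants `ρ⁰_i, ν⁰_j` and a constant `N′×N` matrix `C`. -/
structure KPData (N N' : ℕ) where
  L : EllLattice
  del : ℂ
  eps : ℂ
  lam : ℂ
  xi0 : ℂ
  κ : Fin N → ℂ
  κ' : Fin N' → ℂ
  ρ0 : Fin N → ℂ
  ν0 : Fin N' → ℂ
  C : Matrix (Fin N') (Fin N) ℂ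

namespace KPData

variable {N N' : ℕ}

/-- `ξ = ξ₀ + nδ + mε + hλ`. -/
def xi (D : KPData N N') (n m h : ℤ) : ℂ :=
  D.xi0 + n • D.del + m • D.eps + h • D.lam

/-- The plane-wave factor `ρ_i(n,m,h)`. -/
def ρ (D : KPData N N') (i : Fin N) (n m h : ℤ) : ℂ :=
  (Complex.exp (-(D.L.zeta D.del) * D.κ i) * D.L.Psi D.del (-(D.κ i))) ^ n *
  (Complex.exp (-(D.L.zeta D.eps) * D.κ i) * D.L.Psi D.eps (-(D.κ i))) ^ m *
  (Complex.exp (-(D.L.zeta D.lam) * D.κ i) * D.L.Psi D.lam (-(D.κ i))) ^ h *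
  Complex.exp (D.L.zeta (D.xi n m h) * D.κ i) * D.ρ0 i

/-- The plane-wave factor `ν_j(n,m,h)`. -/
def ν (D : KPData N N') (j : Fin N') (n m h : ℤ) : ℂ :=
  (Complex.exp (D.L.zeta D.del * D.κ' j) * D.L.Psi D.del (D.κ' j)) ^ (-n) *
  (Complex.exp (D.L.zeta D.eps * D.κ' j) * D.L.Psi D.eps (D.κ' j)) ^ (-m) *
  (Complex.exp (D.L.zeta D.lam * D.κ' j) * D.L.Psi D.lam (D.κ' j)) ^ (-h) *
  Complex.exp (D.L.zeta (D.xi n m h) * D.κ' j) * D.ν0 j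

/-- The dressed elliptic Cauchy matrix `M_{ij} = ρ_i Ψ_ξ(κ_i + κ′_j) ν_j`. -/
def M (D : KPData N N') (n m h : ℤ) : Matrix (Fin N) (Fin N') ℂ :=
  Matrix.of fun i j => D.ρ i n m h * D.L.Psi (D.xi n m h) (D.κ i + D.κ' j) * D.ν j n m h

/-- The column vector `r = (ρ_i Ψ_ξ(κ_i))_i`. -/
def r (D : KPData N N') (n m h : ℤ) : Fin N → ℂ :=
  fun i => D.ρ i n m h * D.L.Psi (D.xi n m h) (D.κ i)

/-- The column vector `s = (ν_j Ψ_ξ(κ′_j))_j`. -/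
def s (D : KPData N N') (n m h : ℤ) : Fin N' → ℂ :=
  fun j => D.ν j n m h * D.L.Psi (D.xi n m h) (D.κ' j)

/-- The τ-function `τ = det(1 + MC)`. -/
def τ (D : KPData N N') (n m h : ℤ) : ℂ := (1 + D.M n m h * D.C).det

/-- The diagonal matrix `χ_{α,K}(ξ) = diag(χ_{α,κ_i}(ξ))`. -/
def DK (D : KPData N N') (α : ℂ) (n m h : ℤ) : Matrix (Fin N) (Fin N) ℂ :=
  Matrix.diagonal fun i => D.L.chi α (D.κ i) (D.xi n m h)

/-- The diagonal matrix `χ_{β,K′}(ξ) = diag(χ_{β,κ′_j}(ξ))`. -/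
def DK' (D : KPData N N') (β : ℂ) (n m h : ℤ) : Matrix (Fin N') (Fin N') ℂ :=
  Matrix.diagonal fun j => D.L.chi β (D.κ' j) (D.xi n m h)

/-- `W_β = 1 − sᵀ (χ_{β,K′}(ξ))⁻¹ C (1+MC)⁻¹ r`. -/
def W (D : KPData N N') (β : ℂ) (n m h : ℤ) : ℂ :=
  1 - D.s n m h ⬝ᵥ ((D.DK' β n m h)⁻¹ *ᵥ (D.C *ᵥ ((1 + D.M n m h * D.C)⁻¹ *ᵥ D.r n m h)))

/-- `V_α = 1 − sᵀ (1+CM)⁻¹ C (χ_{α,K}(ξ))⁻¹ r`. -/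
def V (D : KPData N N') (α : ℂ) (n m h : ℤ) : ℂ :=
  1 - D.s n m h ⬝ᵥ ((1 + D.C * D.M n m h)⁻¹ *ᵥ (D.C *ᵥ ((D.DK α n m h)⁻¹ *ᵥ D.r n m h)))

/-- `w₀ = sᵀ C (1+MC)⁻¹ r`. -/
def w0 (D : KPData N N') (n m h : ℤ) : ℂ :=
  D.s n m h ⬝ᵥ (D.C *ᵥ ((1 + D.M n m h * D.C)⁻¹ *ᵥ D.r n m h))

/-- `w = ζ(ξ) − w₀ − nζ(δ) − mζ(ε) − hζ(λ)`. -/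
def w (D : KPData N N') (n m h : ℤ) : ℂ :=
  D.L.zeta (D.xi n m h) - D.w0 n m h - n • D.L.zeta D.del - m • D.L.zeta D.eps -
    h • D.L.zeta D.lam

/-- `S_{β,α} = sᵀ (χ_{β,K′}(ξ))⁻¹ C (1+MC)⁻¹ (χ_{α,K}(ξ))⁻¹ r`. -/
def S (D : KPData N N') (β α : ℂ) (n m h : ℤ) : ℂ :=
  D.s n m h ⬝ᵥ ((D.DK' β n m h)⁻¹ *ᵥ
    (D.C *ᵥ ((1 + D.M n m h * D.C)⁻¹ *ᵥ ((D.DK α n m h)⁻¹ *ᵥ D.r n m h))))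

/-- `u_α = (1+MC)⁻¹ (χ_{α,K}(ξ))⁻¹ r`. -/
def u (D : KPData N N') (α : ℂ) (n m h : ℤ) : Fin N → ℂ :=
  (1 + D.M n m h * D.C)⁻¹ *ᵥ ((D.DK α n m h)⁻¹ *ᵥ D.r n m h)

/-- `u₀ = (1+MC)⁻¹ r`. -/
def u0 (D : KPData N N') (n m h : ℤ) : Fin N → ℂ :=
  (1 + D.M n m h * D.C)⁻¹ *ᵥ D.r n m h

/-- the adjoint (row) vector `ᵗu_β = sᵀ (χ_{β,K′}(ξ))⁻¹ (1+CM)⁻¹`. -/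
def tu (D : KPData N N') (β : ℂ) (n m h : ℤ) : Fin N' → ℂ :=
  (D.s n m h ᵥ* (D.DK' β n m h)⁻¹) ᵥ* (1 + D.C * D.M n m h)⁻¹

/-- the adjoint (row) vector `ᵗu₀ = sᵀ (1+CM)⁻¹`. -/
def tu0 (D : KPData N N') (n m h : ℤ) : Fin N' → ℂ :=
  D.s n m h ᵥ* (1 + D.C * D.M n m h)⁻¹

/-- The gauge variable `𝒱_α = Φ_ξ(α)·V_α`. -/
def calV (D : KPData N N') (α : ℂ) (n m h : ℤ) : ℂ :=
  D.L.Phi (D.xi n m h) α * D.V α n m h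

/-- The gauge variable `𝒲_β = Φ_ξ(β)·W_β`. -/
def calW (D : KPData N N') (β : ℂ) (n m h : ℤ) : ℂ :=
  D.L.Phi (D.xi n m h) β * D.W β n m h

/-- The Schwarzian variable `Z_{β,α} = Φ_ξ(α+β)·(1 − χ_{α,β}(ξ)·S_{β,α})`. -/
def Z (D : KPData N N') (β α : ℂ) (n m h : ℤ) : ℂ :=
  D.L.Phi (D.xi n m h) (α + β) * (1 - D.L.chi α β (D.xi n m h) * D.S β α n m h)

/-- Genericity of the parameters (together with finitely many auxiliary points `extra`):
no nontrivial integer combination of `ξ₀, δ, ε, λ`, the rapidity parameters and the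
auxiliary points lies on the lattice.  In particular all arguments of `σ` occurring in
the soliton solutions and their shifts lie outside `Λ`. -/
def Generic {P : ℕ} (D : KPData N N') (extra : Fin P → ℂ) : Prop :=
  ∀ (c0 cn cm ch : ℤ) (a : Fin N → ℤ) (b : Fin N' → ℤ) (e : Fin P → ℤ),
    ¬ (c0 = 0 ∧ cn = 0 ∧ cm = 0 ∧ ch = 0 ∧ a = 0 ∧ b = 0 ∧ e = 0) →
    ¬ D.L.mem (c0 • D.xi0 + cn • D.del + cm • D.eps + ch • D.lam +
      (∑ i, a i • D.κ i) + (∑ j, b j • D.κ' j) + ∑ t, e t • extra t)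

end KPData

section aux
open Filter Topology

namespace EllLattice

/-- The associated Mathlib period pair. -/
def pp (L : EllLattice) : PeriodPair where
  ω₁ := L.ω₁
  ω₂ := L.ω₂
  indep := by
    rw [LinearIndependent.pair_iff]
    exact L.indep

lemma mem_iff (L : EllLattice) (z : ℂ) : L.mem z ↔ z ∈ L.pp.lattice := by
  rw [PeriodPair.mem_lattice]
  simp only [mem, pp, zsmul_eq_mul]
  constructor
  · rintro ⟨m, n, h⟩; exact ⟨m, n, h.symm⟩
  · rintro ⟨m, n, h⟩; exact ⟨m, n, h.symm⟩

lemma per_eq (L : EllLattice) (p : ℤ × ℤ) : L.per p = (L.pp.latticeEquivProd.symm p).1 := by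
  rw [PeriodPair.latticeEquiv_symm_apply]
  simp [per, pp]

lemma per_ne_zero (L : EllLattice) (p : {p : ℤ × ℤ // p ≠ 0}) : L.per p.1 ≠ 0 := by
  rw [per_eq]
  intro h
  apply p.2
  have : L.pp.latticeEquivProd.symm p.1 = 0 := Subtype.ext h
  simpa using this

/-- The primary factor. -/
def fac (L : EllLattice) (p : {p : ℤ × ℤ // p ≠ 0}) (z : ℂ) : ℂ :=
  (1 - z / L.per p.1) * Complex.exp (z / L.per p.1 + z ^ 2 / (2 * (L.per p.1) ^ 2))

/-- The product part of sigma. -/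
def uu (L : EllLattice) (z : ℂ) : ℂ := ∏' p : {p : ℤ × ℤ // p ≠ 0}, L.fac p z

lemma sigma_eq (L : EllLattice) (z : ℂ) : L.sigma z = z * L.uu z := rfl

lemma summable_per (L : EllLattice) :
    Summable fun p : {p : ℤ × ℤ // p ≠ 0} => (‖L.per p.1‖ ^ 3)⁻¹ := by
  have h := ZLattice.summable_norm_rpow L.pp.lattice (-3 : ℝ) (by simp; norm_num)
  have h2 := h.comp_injective (i := fun p : {p : ℤ × ℤ // p ≠ 0} => L.pp.latticeEquivProd.symm p.1)
    (L.pp.latticeEquivProd.symm.injective.comp Subtype.val_injective)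
  refine h2.congr fun p => ?_
  simp only [Function.comp, per_eq]
  rw [Real.rpow_neg (norm_nonneg _)]
  norm_cast

lemma prim_bound (t : ℂ) (ht : ‖t‖ ≤ 1) :
    ‖(1 - t) * Complex.exp (t + t ^ 2 / 2) - 1‖ ≤ Real.exp 2 * ‖t‖ ^ 3 := by
  have hd : ∀ x : ℂ, HasDerivAt (fun x : ℂ => (1 - x) * Complex.exp (x + x ^ 2 / 2))
      (-x ^ 2 * Complex.exp (x + x ^ 2 / 2)) x := by
    intro x
    have h1 : HasDerivAt (fun x : ℂ => 1 - x) (-1) x := by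
      simpa using (hasDerivAt_id x).const_sub 1
    have h2 : HasDerivAt (fun x : ℂ => x + x ^ 2 / 2) (1 + x) x := by
      have := (hasDerivAt_id x).add (((hasDerivAt_id x).pow 2).div_const 2)
      convert! this using 1
      simp
    convert! h1.mul h2.cexp using 1
    ring
  have := (convex_closedBall (0 : ℂ) ‖t‖).norm_image_sub_le_of_norm_hasDerivWithin_le
    (C := Real.exp 2 * ‖t‖ ^ 2) (fun x _ => (hd x).hasDerivWithinAt) ?_
    (x := 0) (y := t) (by simp) (by simp)
  · simpa [pow_succ, mul_assoc] using this
  · intro x hx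
    have hx' : ‖x‖ ≤ ‖t‖ := by simpa using hx
    rw [norm_mul, norm_neg, norm_pow, mul_comm]
    gcongr
    rw [Complex.norm_exp]
    apply Real.exp_le_exp.mpr
    refine (Complex.re_le_norm _).trans ((norm_add_le _ _).trans ?_)
    have : ‖x‖ ≤ 1 := hx'.trans ht
    simp only [norm_div, norm_pow, Complex.norm_ofNat]
    nlinarith [norm_nonneg x]

lemma fac_eq (L : EllLattice) (p : {p : ℤ × ℤ // p ≠ 0}) (z : ℂ) :
    L.fac p z = (1 - z / L.per p.1) * Complex.exp (z / L.per p.1 + (z / L.per p.1) ^ 2 / 2) := by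
  unfold fac
  congr 3
  have := L.per_ne_zero p
  field_simp

lemma fac_bound (L : EllLattice) (R : ℝ) (hR : 0 < R) :
    ∀ᶠ p in cofinite, ∀ z : ℂ, ‖z‖ ≤ R →
      ‖L.fac p z - 1‖ ≤ Real.exp 2 * R ^ 3 * (‖L.per p.1‖ ^ 3)⁻¹ := by
  have h := (L.summable_per.mul_left (R ^ 3)).tendsto_cofinite_zero
  filter_upwards [h.eventually_le_const one_pos] with p hp z hz
  have hw : 0 < ‖L.per p.1‖ := norm_pos_iff.mpr (L.per_ne_zero p)
  have h1 : R / ‖L.per p.1‖ ≤ 1 := by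
    rw [← div_eq_mul_inv, ← div_pow] at hp
    by_contra hc
    push Not at hc
    exact absurd hp (not_le.mpr (one_lt_pow₀ hc (by norm_num)))
  have h2 : ‖z / L.per p.1‖ ≤ R / ‖L.per p.1‖ := by
    rw [norm_div]; gcongr
  rw [fac_eq]
  refine (prim_bound _ (h2.trans h1)).trans ?_
  rw [mul_assoc, ← div_eq_mul_inv (R ^ 3), ← div_pow]
  gcongr

lemma fac_diff (L : EllLattice) (p : {p : ℤ × ℤ // p ≠ 0}) : Differentiable ℂ (L.fac p) := by
  unfold fac
  fun_prop

lemma tendsto_uu (L : EllLattice) :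
    TendstoLocallyUniformlyOn (fun s : Finset {p : ℤ × ℤ // p ≠ 0} => fun z => ∏ p ∈ s, L.fac p z)
      L.uu atTop Set.univ := by
  rw [tendstoLocallyUniformlyOn_iff_forall_isCompact isOpen_univ]
  intro K _ hK
  obtain ⟨R, hR0, hR⟩ := hK.isBounded.exists_pos_norm_le
  have := Summable.hasProdUniformlyOn_one_add (f := fun p z => L.fac p z - 1) hK
    (L.summable_per.mul_left (Real.exp 2 * R ^ 3))
    (by filter_upwards [L.fac_bound R hR0] with p hp x hx using hp x (hR x hx))
    (fun p => ((L.fac_diff p).continuous.sub continuous_const).continuousOn)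
  rw [hasProdUniformlyOn_iff_tendstoUniformlyOn] at this
  simpa [uu] using! this

lemma fac_ne_zero (L : EllLattice) (p : {p : ℤ × ℤ // p ≠ 0}) (z : ℂ) (hz : ¬ L.mem z) :
    L.fac p z ≠ 0 := by
  unfold fac
  refine mul_ne_zero ?_ (Complex.exp_ne_zero _)
  intro h
  apply hz
  have hw := L.per_ne_zero p
  refine ⟨p.1.1, p.1.2, ?_⟩
  change z = L.per p.1
  field_simp at h
  linear_combination -h

lemma uu_ne_zero (L : EllLattice) (z : ℂ) (hz : ¬ L.mem z) : L.uu z ≠ 0 := by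
  have := tprod_one_add_ne_zero_of_summable (R := ℂ) (f := fun p => L.fac p z - 1) ?_ ?_
  · simpa [uu] using! this
  · intro p; simpa using L.fac_ne_zero p z hz
  · refine Summable.of_norm_bounded_eventually
      (L.summable_per.mul_left (Real.exp 2 * (‖z‖ + 1) ^ 3)) ?_
    filter_upwards [L.fac_bound (‖z‖ + 1) (by positivity)] with p hp
    simpa using hp z (by simp)

lemma uu_diff (L : EllLattice) : Differentiable ℂ L.uu := by
  rw [← differentiableOn_univ]
  refine L.tendsto_uu.differentiableOn (Eventually.of_forall fun s => ?_) isOpen_univ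
  have := L.fac_diff
  fun_prop

lemma sigma_diff (L : EllLattice) : Differentiable ℂ L.sigma := by
  have : L.sigma = fun z => z * L.uu z := funext L.sigma_eq
  rw [this]
  have := L.uu_diff
  fun_prop

lemma not_mem_zero (L : EllLattice) : L.mem 0 := ⟨0, 0, by simp⟩

lemma sigma_ne_zero (L : EllLattice) (z : ℂ) (hz : ¬ L.mem z) : L.sigma z ≠ 0 := by
  rw [sigma_eq]
  refine mul_ne_zero ?_ (L.uu_ne_zero z hz)
  rintro rfl
  exact hz L.not_mem_zero

lemma uu_zero (L : EllLattice) : L.uu 0 = 1 := by simp [uu, fac]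

lemma sigma_zero (L : EllLattice) : L.sigma 0 = 0 := by simp [sigma_eq]

lemma deriv_sigma_zero (L : EllLattice) : deriv L.sigma 0 = 1 := by
  have : HasDerivAt (fun z => z * L.uu z) (1 * L.uu 0 + 0 * deriv L.uu 0) 0 :=
    (hasDerivAt_id (0 : ℂ)).mul (L.uu_diff 0).hasDerivAt
  have h2 : L.sigma = fun z => z * L.uu z := funext L.sigma_eq
  rw [h2, this.deriv, uu_zero]; simp

lemma sigma_neg (L : EllLattice) (z : ℂ) : L.sigma (-z) = - L.sigma z := by
  rw [sigma_eq, sigma_eq, neg_mul]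
  congr 2
  let e : {p : ℤ × ℤ // p ≠ 0} ≃ {p : ℤ × ℤ // p ≠ 0} :=
    (Equiv.neg (ℤ × ℤ)).subtypeEquiv (fun a => by simp)
  unfold uu
  rw [← e.tprod_eq]
  congr 1
  ext p
  have : L.per (e p).1 = - L.per p.1 := by
    simp [e, per]; ring
  rw [fac_eq, fac_eq, this]
  simp
end EllLattice
namespace EllLattice

lemma hasDerivAt_logDeriv {f : ℂ → ℂ} (hf : Differentiable ℂ f) {z : ℂ} (hz : f z ≠ 0) :
    HasDerivAt (logDeriv f) ((deriv (deriv f) z * f z - deriv f z * deriv f z) / f z ^ 2) z := by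
  have h1 : HasDerivAt (deriv f) (deriv (deriv f) z) z :=
    (hf.analyticAt z).deriv.differentiableAt.hasDerivAt
  exact h1.div (hf z).hasDerivAt hz

lemma isOpen_compl (L : EllLattice) : IsOpen {z | ¬ L.mem z} := by
  have : {z | ¬ L.mem z} = (L.pp.lattice : Set ℂ)ᶜ := by
    ext z; simp [mem_iff]
  rw [this]
  exact L.pp.isClosed_lattice.isOpen_compl

lemma logDeriv_fac (L : EllLattice) (p : {p : ℤ × ℤ // p ≠ 0}) (z : ℂ) (hz : ¬ L.mem z) :
    logDeriv (L.fac p) z = 1 / (z - L.per p.1) + 1 / L.per p.1 + z / L.per p.1 ^ 2 := by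
  have hw := L.per_ne_zero p
  have hne : z - L.per p.1 ≠ 0 := by
    intro h
    exact hz ⟨p.1.1, p.1.2, sub_eq_zero.mp h⟩
  have hne' : L.per p.1 - z ≠ 0 := by
    intro h; apply hne; linear_combination -h
  have h1 : HasDerivAt (fun z : ℂ => 1 - z / L.per p.1) (-(1 / L.per p.1)) z := by
    simpa using ((hasDerivAt_id z).div_const (L.per p.1)).const_sub 1
  have h2 : HasDerivAt (fun z : ℂ => z / L.per p.1 + z ^ 2 / (2 * (L.per p.1) ^ 2))
      (1 / L.per p.1 + 2 * z / (2 * (L.per p.1) ^ 2)) z := by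
    have := ((hasDerivAt_id z).div_const (L.per p.1)).add
      (((hasDerivAt_id z).pow 2).div_const (2 * (L.per p.1) ^ 2))
    convert! this using 1
    simp
  have h3 := h1.mul h2.cexp
  have h4 : deriv (L.fac p) z = _ := h3.deriv
  rw [logDeriv_apply, h4]
  unfold fac
  field_simp
  ring

lemma hasSum_except (L : EllLattice) (z : ℂ) :
    HasSum (fun p : {p : ℤ × ℤ // p ≠ 0} => 1 / (z - L.per p.1) ^ 2 - 1 / L.per p.1 ^ 2)
      (L.pp.weierstrassPExcept 0 z) := by
  have h := L.pp.hasSum_weierstrassPExcept 0 z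
  rw [← L.pp.latticeEquivProd.symm.toEquiv.hasSum_iff] at h
  rw [← hasSum_subtype_iff_of_support_subset (s := {p : ℤ × ℤ | p ≠ 0})] at h
  · convert! h using 1
    ext p
    have := L.per_ne_zero p
    rw [per_eq] at this
    have hp : p.1 ≠ 0 := p.2
    simp [per_eq, hp]
  · intro p hp
    simp only [Function.mem_support] at hp
    intro h0
    apply hp
    simp [h0]

lemma sum_deriv (L : EllLattice) (s : Finset {p : ℤ × ℤ // p ≠ 0}) (z : ℂ) (hz : ¬ L.mem z) :
    HasDerivAt (logDeriv (fun z => ∏ p ∈ s, L.fac p z))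
      (-∑ p ∈ s, (1 / (z - L.per p.1) ^ 2 - 1 / L.per p.1 ^ 2)) z := by
  have h1 : (fun y => ∑ p ∈ s, (1 / (y - L.per p.1) + 1 / L.per p.1 + y / L.per p.1 ^ 2))
      =ᶠ[𝓝 z] logDeriv (fun z => ∏ p ∈ s, L.fac p z) := by
    filter_upwards [L.isOpen_compl.mem_nhds hz] with y hy
    have := logDeriv_prod (s := s) (f := fun p => L.fac p) (x := y)
      (fun p _ => L.fac_ne_zero p y hy) (fun p _ => L.fac_diff p y)
    rw [this]
    exact Finset.sum_congr rfl fun p _ => (L.logDeriv_fac p y hy).symm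
  refine HasDerivAt.congr_of_eventuallyEq ?_ h1.symm
  rw [← Finset.sum_neg_distrib]
  refine HasDerivAt.fun_sum fun p _ => ?_
  have hne : z - L.per p.1 ≠ 0 := by
    intro h
    exact hz ⟨p.1.1, p.1.2, sub_eq_zero.mp h⟩
  have ha : HasDerivAt (fun y : ℂ => y - L.per p.1) 1 z := (hasDerivAt_id z).sub_const _
  have hb := ((ha.inv hne).add_const (1 / L.per p.1)).add
    ((hasDerivAt_id z).div_const (L.per p.1 ^ 2))
  convert! hb using 1
  · ext y; simp
  · ring

lemma deriv_logDeriv_uu (L : EllLattice) (z : ℂ) (hz : ¬ L.mem z) :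
    HasDerivAt (logDeriv L.uu) (-L.pp.weierstrassPExcept 0 z) z := by
  have hu := L.uu_ne_zero z hz
  have key := hasDerivAt_logDeriv L.uu_diff hu
  convert! key using 1
  have hd : ∀ s : Finset {p : ℤ × ℤ // p ≠ 0}, Differentiable ℂ (fun z => ∏ p ∈ s, L.fac p z) := by
    intro s
    have := L.fac_diff
    fun_prop
  have t0 := L.tendsto_uu
  have t1 := t0.deriv (Eventually.of_forall fun s => (hd s).differentiableOn) isOpen_univ
  have t2 := t1.deriv (Eventually.of_forall fun s => by
    intro x _
    exact ((hd s).analyticAt x).deriv.differentiableAt.differentiableWithinAt) isOpen_univ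
  have l0 := t0.tendsto_at (Set.mem_univ z)
  have l1 := t1.tendsto_at (Set.mem_univ z)
  have l2 := t2.tendsto_at (Set.mem_univ z)
  have l3 := ((l2.mul l0).sub (l1.mul l1)).div (l0.pow 2) (pow_ne_zero 2 hu)
  have l4 := (L.hasSum_except z).neg
  refine tendsto_nhds_unique ?_ l3
  refine Tendsto.congr (fun s => ?_) (show Tendsto _ _ _ from (L.hasSum_except z)).neg
  have hne : ∏ p ∈ s, L.fac p z ≠ 0 := Finset.prod_ne_zero_iff.mpr fun p _ => L.fac_ne_zero p z hz
  exact (L.sum_deriv s z hz).unique (hasDerivAt_logDeriv (hd s) hne)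

lemma hasDerivAt_zeta (L : EllLattice) (z : ℂ) (hz : ¬ L.mem z) :
    HasDerivAt L.zeta (-L.pp.weierstrassP z) z := by
  have hz0 : z ≠ 0 := by rintro rfl; exact hz L.not_mem_zero
  have h1 : (fun y => y⁻¹ + logDeriv L.uu y) =ᶠ[𝓝 z] L.zeta := by
    filter_upwards [L.isOpen_compl.mem_nhds hz] with y hy
    have hy0 : y ≠ 0 := by rintro rfl; exact hy L.not_mem_zero
    have h2 : L.sigma = fun z => z * L.uu z := funext L.sigma_eq
    change _ = logDeriv L.sigma y
    rw [h2, logDeriv_mul (f := fun z => z) y hy0 (L.uu_ne_zero y hy) differentiableAt_id (L.uu_diff y)]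
    simp
  refine HasDerivAt.congr_of_eventuallyEq ?_ h1.symm
  have := (hasDerivAt_inv hz0).add (L.deriv_logDeriv_uu z hz)
  convert! this using 1
  have h3 := L.pp.weierstrassPExcept_add 0 z
  rw [← h3]
  simp

lemma mem_add (L : EllLattice) {z w : ℂ} (hw : L.mem w) : L.mem (z + w) ↔ L.mem z := by
  rw [mem_iff, mem_iff] at *
  exact ⟨fun h => by simpa using L.pp.lattice.sub_mem h hw, fun h => L.pp.lattice.add_mem h hw⟩

lemma countable_mem (L : EllLattice) : {z | L.mem z}.Countable := by
  have : {z | L.mem z} ⊆ Set.range L.per := by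
    rintro z ⟨m, n, h⟩
    exact ⟨(m, n), h.symm⟩
  exact (Set.countable_range _).mono this

lemma preconn (L : EllLattice) : IsPreconnected {z | ¬ L.mem z} := by
  have := (L.countable_mem.isPathConnected_compl_of_one_lt_rank
    (by simp)).isConnected.isPreconnected
  exact this

lemma dense_compl (L : EllLattice) : Dense {z | ¬ L.mem z} := L.countable_mem.dense_compl ℝ

/-- Quasi-periodicity of sigma. -/
lemma sigma_quasi (L : EllLattice) (w : ℂ) (hw : L.mem w) :
    ∃ c η : ℂ, c ≠ 0 ∧ ∀ z, L.sigma (z + w) = c * Complex.exp (η * z) * L.sigma z := by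
  have hsh : ∀ z, ¬ L.mem z → HasDerivAt (fun y => L.zeta (y + w)) (-L.pp.weierstrassP z) z := by
    intro z hz
    have := (L.hasDerivAt_zeta (z + w) (by rwa [L.mem_add hw])).comp_add_const z w
    convert! this using 1
    have hw' := (L.mem_iff w).mp hw
    exact congrArg _ (L.pp.weierstrassP_add_coe z ⟨w, hw'⟩).symm
  have hd : ∀ z, ¬ L.mem z → HasDerivAt (fun y => L.zeta (y + w) - L.zeta y) 0 z := by
    intro z hz
    simpa using! (hsh z hz).sub (L.hasDerivAt_zeta z hz)
  obtain ⟨η, hη⟩ := L.isOpen_compl.exists_is_const_of_deriv_eq_zero L.preconn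
    (f := fun y => L.zeta (y + w) - L.zeta y)
    (fun z hz => (hd z hz).differentiableAt.differentiableWithinAt)
    (fun z hz => (hd z hz).deriv)
  have hq : ∀ z, ¬ L.mem z →
      HasDerivAt (fun y => L.sigma (y + w) * Complex.exp (-η * y) / L.sigma y) 0 z := by
    intro z hz
    have hs := L.sigma_ne_zero z hz
    have hs' := L.sigma_ne_zero (z + w) (by rwa [L.mem_add hw])
    have h1 := (L.sigma_diff (z + w)).hasDerivAt.comp_add_const z w
    have h2 : HasDerivAt (fun y : ℂ => -η * y) (-η) z := by
      simpa using! (hasDerivAt_id z).const_mul (-η)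
    have h3 := (h1.mul h2.cexp).div (L.sigma_diff z).hasDerivAt hs
    convert! h3 using 1
    have h4 : L.zeta (z + w) - L.zeta z = η := hη z hz
    unfold zeta at h4
    symm
    rw [div_eq_zero_iff]
    left
    have h5 : deriv L.sigma (z + w) * L.sigma z - deriv L.sigma z * L.sigma (z + w)
        = η * L.sigma (z + w) * L.sigma z := by
      rw [← h4]
      field_simp
    simp only [Pi.mul_apply]
    linear_combination Complex.exp (-η * z) * h5
  obtain ⟨c, hc⟩ := L.isOpen_compl.exists_is_const_of_deriv_eq_zero L.preconn
    (f := fun y => L.sigma (y + w) * Complex.exp (-η * y) / L.sigma y)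
    (fun z hz => (hq z hz).differentiableAt.differentiableWithinAt)
    (fun z hz => (hq z hz).deriv)
  refine ⟨c, η, ?_, ?_⟩
  · obtain ⟨z, hz⟩ := L.dense_compl.nonempty
    rw [← hc z hz]
    have hs := L.sigma_ne_zero z hz
    have hs' := L.sigma_ne_zero (z + w) (by rw [L.mem_add hw]; exact hz)
    have := Complex.exp_ne_zero (-η * z)
    positivity
  · have hcont := L.sigma_diff.continuous
    have := Continuous.ext_on L.dense_compl (f := fun z => L.sigma (z + w))
      (g := fun z => c * Complex.exp (η * z) * L.sigma z) (by fun_prop) (by fun_prop) ?_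
    · exact fun z => congrFun this z
    · intro z hz
      have hs := L.sigma_ne_zero z hz
      have h1 := hc z hz
      simp only at h1 ⊢
      rw [← h1, neg_mul, Complex.exp_neg]
      have := Complex.exp_ne_zero (η * z)
      field_simp

lemma sigma_mem (L : EllLattice) (w : ℂ) (hw : L.mem w) :
    L.sigma w = 0 ∧ deriv L.sigma w ≠ 0 := by
  obtain ⟨c, η, hc, h⟩ := L.sigma_quasi w hw
  refine ⟨by simpa [sigma_zero] using h 0, ?_⟩
  have h1 : HasDerivAt (fun z => L.sigma (z + w)) (deriv L.sigma w) 0 := by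
    apply HasDerivAt.comp_add_const
    simpa using (L.sigma_diff w).hasDerivAt
  have h2 : HasDerivAt (fun y : ℂ => η * y) η 0 := by
    simpa using! (hasDerivAt_id (0 : ℂ)).const_mul η
  have h3 := (h2.cexp.const_mul c).mul (L.sigma_diff 0).hasDerivAt
  have h4 := h1.unique (h3.congr_of_eventuallyEq (Eventually.of_forall h))
  rw [h4, sigma_zero, deriv_sigma_zero]
  simpa using hc

end EllLattice
namespace EllLattice

/-- Division of entire functions: simple zeros. -/
lemma exists_quot {F g : ℂ → ℂ} (hF : Differentiable ℂ F) (hg : Differentiable ℂ g)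
    (h : ∀ z, g z = 0 → F z = 0 ∧ deriv g z ≠ 0) :
    ∃ H : ℂ → ℂ, Differentiable ℂ H ∧ ∀ z, g z ≠ 0 → H z = F z / g z := by
  classical
  refine ⟨fun z => if g z = 0 then deriv F z / deriv g z else F z / g z, ?_, ?_⟩
  · intro z
    by_cases hz : g z = 0
    · obtain ⟨hF0, hg0⟩ := h z hz
      have hdF : DifferentiableAt ℂ (dslope F z) z := by
        have := (Complex.differentiableOn_dslope (f := F) (c := z) (s := Set.univ)
          Filter.univ_mem).mpr hF.differentiableOn
        exact (differentiableOn_univ.mp this) z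
      have hdg : DifferentiableAt ℂ (dslope g z) z := by
        have := (Complex.differentiableOn_dslope (f := g) (c := z) (s := Set.univ)
          Filter.univ_mem).mpr hg.differentiableOn
        exact (differentiableOn_univ.mp this) z
      have hne : dslope g z z ≠ 0 := by rwa [dslope_same]
      have hev : ∀ᶠ y in 𝓝 z, dslope g z y ≠ 0 := hdg.continuousAt.eventually_ne hne
      refine (hdF.div hdg hne).congr_of_eventuallyEq ?_
      filter_upwards [hev] with y hy
      simp only [Pi.div_apply]
      by_cases hyz : y = z
      · subst hyz
        simp [hz, dslope_same]
      · have e1 : F y = (y - z) * dslope F z y := by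
          have := sub_smul_dslope F z y
          rw [hF0, sub_zero] at this
          simpa using this.symm
        have e2 : g y = (y - z) * dslope g z y := by
          have := sub_smul_dslope g z y
          rw [hz, sub_zero] at this
          simpa using this.symm
        have hs : y - z ≠ 0 := sub_ne_zero.mpr hyz
        rw [if_neg (by rw [e2]; exact mul_ne_zero hs hy), e1, e2]
        field_simp
    · refine ((hF z).div (hg z) hz).congr_of_eventuallyEq ?_
      filter_upwards [(hg z).continuousAt.eventually_ne hz] with y hy
      simp [hy]
  · intro z hz
    simp [hz]

lemma mem_neg (L : EllLattice) {z : ℂ} (hz : L.mem z) : L.mem (-z) := by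
  rw [mem_iff] at *
  exact L.pp.lattice.neg_mem hz

lemma mem_of_sub (L : EllLattice) {z w : ℂ} (hz : L.mem z) (hw : L.mem w) : L.mem (z - w) := by
  rw [mem_iff] at *
  exact L.pp.lattice.sub_mem hz hw

lemma sigma_eq_zero_iff (L : EllLattice) (z : ℂ) : L.sigma z = 0 ↔ L.mem z :=
  ⟨fun h => by by_contra hc; exact L.sigma_ne_zero z hc h, fun h => (L.sigma_mem z h).1⟩

/-- Three term relation. -/
lemma three_term (L : EllLattice) (b c : ℂ) (h2b : ¬ L.mem (2 * b)) (hbc : ¬ L.mem (b + c))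
    (hbc' : ¬ L.mem (b - c)) (a d : ℂ) :
    L.sigma (a + b) * L.sigma (a - b) * (L.sigma (c + d) * L.sigma (c - d)) +
    L.sigma (b + c) * L.sigma (b - c) * (L.sigma (a + d) * L.sigma (a - d)) +
    L.sigma (c + a) * L.sigma (c - a) * (L.sigma (b + d) * L.sigma (b - d)) = 0 := by
  have hσ := L.sigma_diff
  have hcσ := hσ.continuous
  -- rewrite `c - a` as `-(a - c)`
  set F : ℂ → ℂ := fun a =>
    L.sigma (a + b) * L.sigma (a - b) * (L.sigma (c + d) * L.sigma (c - d)) +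
    L.sigma (b + c) * L.sigma (b - c) * (L.sigma (a + d) * L.sigma (a - d)) -
    L.sigma (a + c) * L.sigma (a - c) * (L.sigma (b + d) * L.sigma (b - d)) with hF
  set g : ℂ → ℂ := fun a => L.sigma (a + b) * L.sigma (a - b) with hg
  have hFd : Differentiable ℂ F := by rw [hF]; fun_prop
  have hgd : Differentiable ℂ g := by rw [hg]; fun_prop
  have hper : ∀ w, L.mem w → ∃ m : ℂ → ℂ, (∀ z, m z ≠ 0) ∧ (∀ z, F (z + w) = m z * F z) ∧
      (∀ z, g (z + w) = m z * g z) := by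
    intro w hw
    obtain ⟨k, η, hk, hq⟩ := L.sigma_quasi w hw
    have hpair : ∀ z t, L.sigma (z + w + t) * L.sigma (z + w - t) =
        k ^ 2 * Complex.exp (2 * η * z) * (L.sigma (z + t) * L.sigma (z - t)) := by
      intro z t
      rw [show z + w + t = z + t + w by ring, show z + w - t = z - t + w by ring, hq, hq,
        show 2 * η * z = η * (z + t) + η * (z - t) by ring, Complex.exp_add]
      ring
    refine ⟨fun z => k ^ 2 * Complex.exp (2 * η * z), fun z => ?_, fun z => ?_, fun z => ?_⟩
    · exact mul_ne_zero (pow_ne_zero 2 hk) (Complex.exp_ne_zero _)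
    · simp only [hF, hpair]
      ring
    · simp only [hg, hpair]
  have hFb : F b = 0 := by
    simp only [hF, sub_self, sigma_zero]; ring
  have hFb' : F (-b) = 0 := by
    simp only [hF]
    rw [show -b + b = 0 by ring, show -b + d = -(b - d) by ring, show -b - d = -(b + d) by ring,
      show -b + c = -(b - c) by ring, show -b - c = -(b + c) by ring]
    simp only [sigma_zero, sigma_neg]; ring
  have hFw : ∀ z w, L.mem w → F z = 0 → F (z + w) = 0 := by
    intro z w hw hz
    obtain ⟨m, _, h1, _⟩ := hper w hw
    rw [h1, hz, mul_zero]
  obtain ⟨H, hH, hHq⟩ := exists_quot hFd hgd (by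
    intro z hz
    have hder : HasDerivAt g (deriv L.sigma (z + b) * L.sigma (z - b) +
        L.sigma (z + b) * deriv L.sigma (z - b)) z :=
      ((hσ (z + b)).hasDerivAt.comp_add_const z b).mul
        ((hσ (z - b)).hasDerivAt.comp_sub_const z b)
    rw [hder.deriv]
    rcases mul_eq_zero.mp hz with h | h
    · have hm := (L.sigma_eq_zero_iff _).mp h
      have hn : ¬ L.mem (z - b) := by
        intro hc
        have := L.mem_of_sub hm hc
        apply h2b
        convert! this using 1
        ring
      constructor
      · have := hFw (-b) (z + b) hm hFb'
        simpa using this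
      · rw [h, zero_mul, add_zero]
        exact mul_ne_zero (L.sigma_mem _ hm).2 (L.sigma_ne_zero _ hn)
    · have hm := (L.sigma_eq_zero_iff _).mp h
      have hn : ¬ L.mem (z + b) := by
        intro hc
        have := L.mem_of_sub hc hm
        apply h2b
        convert! this using 1
        ring
      constructor
      · have := hFw b (z - b) hm hFb
        simpa using this
      · rw [h, mul_zero, zero_add]
        exact mul_ne_zero (L.sigma_ne_zero _ hn) (L.sigma_mem _ hm).2)
  have hdense : Dense {z | g z ≠ 0} := by
    have : {z | g z = 0} ⊆ (fun z => z - b) '' {z | L.mem z} ∪ (fun z => z + b) '' {z | L.mem z} := by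
      intro z hz
      rcases mul_eq_zero.mp hz with h | h
      · left; exact ⟨z + b, (L.sigma_eq_zero_iff _).mp h, by ring⟩
      · right; exact ⟨z - b, (L.sigma_eq_zero_iff _).mp h, by ring⟩
    have hc : {z | g z = 0}.Countable :=
      ((L.countable_mem.image _).union (L.countable_mem.image _)).mono this
    exact hc.dense_compl ℝ
  have hHper : ∀ z w, w ∈ L.pp.lattice → H (z + w) = H z := by
    intro z w hw
    rw [← mem_iff] at hw
    obtain ⟨m, hm, h1, h2⟩ := hper w hw
    have hHc := hH.continuous
    have := Continuous.ext_on hdense (f := fun z => H (z + w)) (g := H) (by fun_prop) hHc (by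
      intro y hy
      have hy' : g (y + w) ≠ 0 := by rw [h2]; exact mul_ne_zero (hm y) hy
      have hmy := hm y
      have hy0 : g y ≠ 0 := hy
      simp only
      rw [hHq _ hy', hHq _ hy, h1, h2]
      field_simp)
    exact congrFun this z
  have hconst := fun x y => hH.apply_eq_apply_of_bounded
    (IsZLattice.isCompact_range_of_periodic L.pp.lattice H hH.continuous hHper).isBounded x y
  have hgc : g c ≠ 0 := by
    refine mul_ne_zero (L.sigma_ne_zero _ ?_) (L.sigma_ne_zero _ ?_)
    · rwa [add_comm]
    · intro h; apply hbc'; simpa using L.mem_neg h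
  have hFc : F c = 0 := by
    simp only [hF, sub_self, sigma_zero]
    rw [show b - c = -(c - b) by ring, sigma_neg, add_comm c b]
    ring
  have hH0 : ∀ z, H z = 0 := by
    intro z
    rw [hconst z c, hHq c hgc, hFc, zero_div]
  have hF0 : F a = 0 := by
    by_cases hga : g a = 0
    · have := Continuous.ext_on hdense hFd.continuous (continuous_const (y := (0 : ℂ))) (by
        intro y hy
        have h1 := hHq y hy
        rw [hH0 y] at h1
        have hy0 : g y ≠ 0 := hy
        rcases div_eq_zero_iff.mp h1.symm with h | h
        · exact h
        · exact absurd h hy0)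
      exact congrFun this a
    · have h1 := hHq a hga
      rw [hH0 a] at h1
      rcases div_eq_zero_iff.mp h1.symm with h | h
      · exact h
      · exact absurd h hga
  rw [← hF0]
  simp only [hF]
  rw [show c - a = -(a - c) by ring, sigma_neg, add_comm c a]
  ring

/-- The zeta identity. -/
lemma chi_eq (L : EllLattice) (α β γ : ℂ) (hα : ¬ L.mem α) (hβ : ¬ L.mem β) (hγ : ¬ L.mem γ)
    (hs : ¬ L.mem (γ + α + β)) (hgen : ¬ L.mem (2 * γ + α + β)) :
    L.chi α β γ = L.sigma (α + β) * L.sigma (β + γ) * L.sigma (γ + α) /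
      (L.sigma α * L.sigma β * L.sigma γ * L.sigma (γ + α + β)) := by
  have hσ := L.sigma_diff
  set a := (α - β) / 2 with ha
  set c := (α + β) / 2 with hc
  set b := γ + c with hb
  have e1 : a + c = α := by rw [ha, hc]; ring
  have e2 : a - c = -β := by rw [ha, hc]; ring
  have e3 : b + c = γ + α + β := by rw [hb, hc]; ring
  have e4 : b - c = γ := by rw [hb, hc]; ring
  have e5 : a + b = γ + α := by rw [hb, hc, ha]; ring
  have e6 : a - b = -(β + γ) := by rw [hb, hc, ha]; ring
  have e7 : c + c = α + β := by rw [hc]; ring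
  have e8 : c + a = α := by rw [ha, hc]; ring
  have e9 : c - a = β := by rw [ha, hc]; ring
  have T := L.three_term b c (by convert! hgen using 2; rw [hb, hc]; ring) (by rwa [e3]) (by rwa [e4]) a
  have hp : ∀ x : ℂ, HasDerivAt (fun d => L.sigma (x + d)) (deriv L.sigma (x + c)) c := fun x =>
    (hσ (x + c)).hasDerivAt.comp_const_add x c
  have hm : ∀ x : ℂ, HasDerivAt (fun d => L.sigma (x - d)) (-deriv L.sigma (x - c)) c := fun x =>
    (hσ (x - c)).hasDerivAt.comp_const_sub x c
  have hder := ((((hp c).mul (hm c)).const_mul (L.sigma (a + b) * L.sigma (a - b))).add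
    (((hp a).mul (hm a)).const_mul (L.sigma (b + c) * L.sigma (b - c)))).add
    (((hp b).mul (hm b)).const_mul (L.sigma (c + a) * L.sigma (c - a)))
  have h0 := hder.unique ((hasDerivAt_const c (0 : ℂ)).congr_of_eventuallyEq
    (Eventually.of_forall T))
  have hdneg : deriv L.sigma (-β) = deriv L.sigma β := by
    have h1 : HasDerivAt (fun z => L.sigma (-z)) (-deriv L.sigma (-β)) β := by
      have := (hσ (-β)).hasDerivAt.scomp β (hasDerivAt_neg β)
      simpa using! this
    have h2 : HasDerivAt (fun z => L.sigma (-z)) (-deriv L.sigma β) β := by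
      have := (hσ β).hasDerivAt.neg
      refine this.congr_of_eventuallyEq (Eventually.of_forall fun z => L.sigma_neg z)
    exact neg_injective (h1.unique h2)
  rw [sub_self, e1, e2, e3, e4, e5, e6, e7, e8, e9, deriv_sigma_zero, sigma_zero, sigma_neg,
    sigma_neg, hdneg] at h0
  have n1 := L.sigma_ne_zero α hα
  have n2 := L.sigma_ne_zero β hβ
  have n3 := L.sigma_ne_zero γ hγ
  have n4 := L.sigma_ne_zero _ hs
  unfold chi zeta
  field_simp
  linear_combination -h0

end EllLattice

theorem EllLattice.fay (L : EllLattice) (ξ δ κ κ' : ℂ)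
    (h1 : ¬ L.mem (ξ + κ - δ)) (h2 : ¬ L.mem (ξ + κ)) (h3 : ¬ L.mem (-δ)) :
    L.sigma (ξ + κ + κ') * L.sigma (δ + κ') * L.sigma κ * L.sigma (ξ + δ) =
      L.sigma (ξ + κ) * L.sigma (ξ + δ + κ') * L.sigma (κ + κ') * L.sigma δ -
      L.sigma (ξ + δ + κ + κ') * L.sigma (δ - κ) * L.sigma ξ * L.sigma κ' := by
  have h := L.three_term ((ξ + κ - δ) / 2) ((ξ + δ + κ) / 2)
    (by convert h1 using 2; ring) (by convert h2 using 2; ring) (by convert h3 using 2; ring)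
    ((ξ + δ + κ) / 2 + κ') ((ξ + δ - κ) / 2)
  rw [show (ξ + δ + κ) / 2 + κ' + (ξ + κ - δ) / 2 = ξ + κ + κ' by ring,
    show (ξ + δ + κ) / 2 + κ' - (ξ + κ - δ) / 2 = δ + κ' by ring,
    show (ξ + δ + κ) / 2 + (ξ + δ - κ) / 2 = ξ + δ by ring,
    show (ξ + δ + κ) / 2 - (ξ + δ - κ) / 2 = κ by ring,
    show (ξ + κ - δ) / 2 + (ξ + δ + κ) / 2 = ξ + κ by ring,
    show (ξ + κ - δ) / 2 - (ξ + δ + κ) / 2 = -δ by ring,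
    show (ξ + δ + κ) / 2 + κ' + (ξ + δ - κ) / 2 = ξ + δ + κ' by ring,
    show (ξ + δ + κ) / 2 + κ' - (ξ + δ - κ) / 2 = κ + κ' by ring,
    show (ξ + δ + κ) / 2 + ((ξ + δ + κ) / 2 + κ') = ξ + δ + κ + κ' by ring,
    show (ξ + δ + κ) / 2 - ((ξ + δ + κ) / 2 + κ') = -κ' by ring,
    show (ξ + κ - δ) / 2 + (ξ + δ - κ) / 2 = ξ by ring,
    show (ξ + κ - δ) / 2 - (ξ + δ - κ) / 2 = -(δ - κ) by ring,
    L.sigma_neg, L.sigma_neg, L.sigma_neg] at h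
  linear_combination h

theorem EllLattice.phi_shift (L : EllLattice) (ξ δ κ κ' : ℂ)
    (hg : ∀ c0 cd ka kb : ℤ, ¬ (c0 = 0 ∧ cd = 0 ∧ ka = 0 ∧ kb = 0) →
      ¬ L.mem (c0 * ξ + cd * δ + ka * κ + kb * κ')) :
    L.Phi δ (-κ) ≠ 0 ∧ L.Phi δ κ' ≠ 0 ∧
    L.Phi δ (-κ) * (L.Phi δ κ')⁻¹ * L.Phi (ξ + δ) (κ + κ') =
      L.Phi ξ (κ + κ') - L.Phi ξ κ * L.Phi ξ κ' / L.chi δ κ' ξ := by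
  have g : ∀ (c0 cd ka kb : ℤ) (z : ℂ), ¬ (c0 = 0 ∧ cd = 0 ∧ ka = 0 ∧ kb = 0) →
      z = c0 * ξ + cd * δ + ka * κ + kb * κ' → ¬ L.mem z := by
    intro c0 cd ka kb z h hz
    rw [hz]; exact hg _ _ _ _ h
  have n1 := g 0 1 0 0 δ (by simp) (by push_cast; ring)
  have n2 := g 1 0 0 0 ξ (by simp) (by push_cast; ring)
  have n3 := g 0 0 1 0 κ (by simp) (by push_cast; ring)
  have n4 := g 0 0 0 1 κ' (by simp) (by push_cast; ring)
  have n5 := g 0 0 1 1 (κ + κ') (by simp) (by push_cast; ring)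
  have n6 := g 1 1 0 0 (ξ + δ) (by simp) (by push_cast; ring)
  have n7 := g 0 1 0 1 (δ + κ') (by simp) (by push_cast; ring)
  have n8 := g 1 0 0 1 (κ' + ξ) (by simp) (by push_cast; ring)
  have n9 := g 1 1 0 1 (ξ + δ + κ') (by simp) (by push_cast; ring)
  have n10 := g 2 1 0 1 (2 * ξ + δ + κ') (by simp) (by push_cast; ring)
  have n11 := g 1 0 1 0 (ξ + κ) (by simp) (by push_cast; ring)
  have n12 := g 1 (-1) 1 0 (ξ + κ - δ) (by simp) (by push_cast; ring)
  have n13 := g 0 (-1) 0 0 (-δ) (by simp) (by push_cast; ring)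
  have n14 := g 0 1 (-1) 0 (δ - κ) (by simp) (by push_cast; ring)
  have hf := L.fay ξ δ κ κ' n12 n11 n13
  have hc := L.chi_eq δ κ' ξ n1 n4 n2 n9 n10
  have s1 := L.sigma_ne_zero _ n1
  have s2 := L.sigma_ne_zero _ n2
  have s3 := L.sigma_ne_zero _ n3
  have s4 := L.sigma_ne_zero _ n4
  have s5 := L.sigma_ne_zero _ n5
  have s6 := L.sigma_ne_zero _ n6
  have s7 := L.sigma_ne_zero _ n7
  have s8 := L.sigma_ne_zero _ n8
  have s9 := L.sigma_ne_zero _ n9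
  have s14 := L.sigma_ne_zero _ n14
  rw [hc]
  unfold EllLattice.Phi
  rw [show δ + -κ = δ - κ by ring, L.sigma_neg κ, show ξ + δ + (κ + κ') = ξ + δ + κ + κ' by ring,
    show ξ + (κ + κ') = ξ + κ + κ' by ring, show ξ + κ' = κ' + ξ by ring]
  refine ⟨?_, ?_, ?_⟩
  · exact div_ne_zero s14 (mul_ne_zero s1 (neg_ne_zero.mpr s3))
  · exact div_ne_zero s7 (mul_ne_zero s1 s4)
  generalize L.sigma (ξ + κ + κ') = x1 at *
  generalize L.sigma (ξ + δ + κ + κ') = x2 at *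
  generalize L.sigma (ξ + δ + κ') = x3 at *
  generalize L.sigma (δ + κ') = x4 at *
  generalize L.sigma (κ' + ξ) = x5 at *
  generalize L.sigma (κ + κ') = x6 at *
  generalize L.sigma (ξ + δ) = x7 at *
  generalize L.sigma (ξ + κ) = x8 at *
  generalize L.sigma (δ - κ) = x9 at *
  generalize L.sigma ξ = x10 at *
  generalize L.sigma δ = x11 at *
  generalize L.sigma κ = x12 at *
  generalize L.sigma κ' = x13 at *
  have e1 : x9 / (x11 * -x12) * (x4 / (x11 * x13))⁻¹ * (x2 / (x7 * x6)) =
      -(x2 * x9 * x10 * x13) / (x12 * x4 * x7 * x6 * x10) := by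
    field_simp
  have e2 : x1 / (x10 * x6) - x8 / (x10 * x12) * (x5 / (x10 * x13)) /
      (x4 * x5 * x7 / (x11 * x13 * x10 * x3)) =
      (x1 * x4 * x12 * x7 - x8 * x3 * x6 * x11) / (x12 * x4 * x7 * x6 * x10) := by
    field_simp
  rw [e1, e2, hf]
  ring

theorem det_shift {N N' : ℕ} (M Mt : Matrix (Fin N) (Fin N') ℂ) (C : Matrix (Fin N') (Fin N) ℂ)
    (r : Fin N → ℂ) (s x : Fin N' → ℂ) (hx : ∀ j, x j ≠ 0)
    (hI : IsUnit (1 + M * C).det)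
    (h : ∀ i j, Mt i j = M i j - r i * s j / x j) :
    (1 + Mt * C).det =
      (1 - s ⬝ᵥ ((Matrix.diagonal x)⁻¹ *ᵥ (C *ᵥ ((1 + M * C)⁻¹ *ᵥ r)))) * (1 + M * C).det := by
  have hd : (Matrix.diagonal x)⁻¹ = Matrix.diagonal (fun j => (x j)⁻¹) := by
    apply Matrix.inv_eq_right_inv
    rw [Matrix.diagonal_mul_diagonal, ← Matrix.diagonal_one]
    congr 1
    funext j
    exact mul_inv_cancel₀ (hx j)
  have hM : 1 + Mt * C = (1 + M * C) + Matrix.replicateCol Unit (-r) *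
      Matrix.replicateRow Unit ((s ᵥ* Matrix.diagonal (fun j => (x j)⁻¹)) ᵥ* C) := by
    have : Mt = M + Matrix.replicateCol Unit (-r) *
        Matrix.replicateRow Unit (s ᵥ* Matrix.diagonal (fun j => (x j)⁻¹)) := by
      ext i j
      rw [h, Matrix.add_apply, Matrix.mul_apply]
      simp [Matrix.vecMul_diagonal]
      ring
    rw [this, Matrix.add_mul, add_assoc, Matrix.mul_assoc]
    congr 3
  rw [hM, Matrix.det_add_replicateCol_mul_replicateRow hI, hd, mul_comm]
  congr 1
  rw [Matrix.det_unique, Matrix.mul_assoc]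
  simp only [Matrix.dotProduct_mulVec, Matrix.add_apply, Matrix.one_apply_eq]
  rw [sub_eq_add_neg, ← dotProduct_neg]
  congr 1
  rw [← Matrix.dotProduct_mulVec _ _ (-r)]
  rfl

theorem KPData.gen_dir {N N' : ℕ} (D : KPData N N') (hgen : D.Generic ![]) (n m h : ℤ)
    (i : Fin N) (j : Fin N') (c0 cn cm ch ka kb : ℤ)
    (hne : ¬ (c0 = 0 ∧ cn = 0 ∧ cm = 0 ∧ ch = 0 ∧ ka = 0 ∧ kb = 0)) :
    ¬ D.L.mem (c0 * D.xi n m h + (cn * D.del + cm * D.eps + ch * D.lam) +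
      ka * D.κ i + kb * D.κ' j) := by
  have := hgen c0 (c0 * n + cn) (c0 * m + cm) (c0 * h + ch) (Pi.single i ka) (Pi.single j kb) 0 ?_
  · convert this using 2
    simp [Pi.single_apply, KPData.xi]
    ring
  · rintro ⟨h0, h1, h2, h3, h4, h5, -⟩
    subst h0
    exact hne ⟨rfl, by simpa using h1, by simpa using h2, by simpa using h3,
      by simpa using h4, by simpa using h5⟩

theorem EllLattice.exp_psi (L : EllLattice) (δ κ : ℂ) :
    Complex.exp (L.zeta δ * κ) * L.Psi δ κ = L.Phi δ κ := by
  unfold EllLattice.Psi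
  rw [mul_left_comm, ← Complex.exp_add]
  simp

theorem EllLattice.exp_psi_neg (L : EllLattice) (δ κ : ℂ) :
    Complex.exp (-(L.zeta δ) * κ) * L.Psi δ (-κ) = L.Phi δ (-κ) := by
  rw [← L.exp_psi δ (-κ)]
  simp

/-- Prefactor of the `i`-th row. -/
def KPData.auxA {N N' : ℕ} (D : KPData N N') (i : Fin N) (n m h : ℤ) : ℂ :=
  D.L.Phi D.del (-(D.κ i)) ^ n * D.L.Phi D.eps (-(D.κ i)) ^ m *
    D.L.Phi D.lam (-(D.κ i)) ^ h * D.ρ0 i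

/-- Prefactor of the `j`-th column. -/
def KPData.auxB {N N' : ℕ} (D : KPData N N') (j : Fin N') (n m h : ℤ) : ℂ :=
  D.L.Phi D.del (D.κ' j) ^ (-n) * D.L.Phi D.eps (D.κ' j) ^ (-m) *
    D.L.Phi D.lam (D.κ' j) ^ (-h) * D.ν0 j

theorem KPData.rho_eq {N N' : ℕ} (D : KPData N N') (i : Fin N) (n m h : ℤ) :
    D.ρ i n m h = D.auxA i n m h * Complex.exp (D.L.zeta (D.xi n m h) * D.κ i) := by
  unfold KPData.ρ KPData.auxA
  rw [D.L.exp_psi_neg, D.L.exp_psi_neg, D.L.exp_psi_neg]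
  ring

theorem KPData.nu_eq {N N' : ℕ} (D : KPData N N') (j : Fin N') (n m h : ℤ) :
    D.ν j n m h = D.auxB j n m h * Complex.exp (D.L.zeta (D.xi n m h) * D.κ' j) := by
  unfold KPData.ν KPData.auxB
  rw [D.L.exp_psi, D.L.exp_psi, D.L.exp_psi]
  ring

theorem KPData.r_eq {N N' : ℕ} (D : KPData N N') (i : Fin N) (n m h : ℤ) :
    D.r n m h i = D.auxA i n m h * D.L.Phi (D.xi n m h) (D.κ i) := by
  unfold KPData.r
  rw [D.rho_eq, mul_assoc, D.L.exp_psi]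

theorem KPData.s_eq {N N' : ℕ} (D : KPData N N') (j : Fin N') (n m h : ℤ) :
    D.s n m h j = D.auxB j n m h * D.L.Phi (D.xi n m h) (D.κ' j) := by
  unfold KPData.s
  rw [D.nu_eq, mul_assoc, D.L.exp_psi]

theorem KPData.M_eq {N N' : ℕ} (D : KPData N N') (i : Fin N) (j : Fin N') (n m h : ℤ) :
    D.M n m h i j = D.auxA i n m h * D.auxB j n m h *
      D.L.Phi (D.xi n m h) (D.κ i + D.κ' j) := by
  unfold KPData.M
  rw [Matrix.of_apply, D.rho_eq, D.nu_eq, ← D.L.exp_psi, mul_add, Complex.exp_add]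
  ring

theorem KPData.shift {N N' : ℕ} (D : KPData N N') (β : ℂ) (n m h n' m' h' : ℤ)
    (hg : ∀ i j, ∀ c0 cd ka kb : ℤ, ¬ (c0 = 0 ∧ cd = 0 ∧ ka = 0 ∧ kb = 0) →
      ¬ D.L.mem (c0 * D.xi n m h + cd * β + ka * D.κ i + kb * D.κ' j))
    (hI : IsUnit ((1 + D.M n m h * D.C).det))
    (hχ : ∀ j, D.L.chi β (D.κ' j) (D.xi n m h) ≠ 0)
    (hxi : D.xi n' m' h' = D.xi n m h + β)
    (hA : ∀ i, D.L.Phi β (-(D.κ i)) ≠ 0 →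
      D.auxA i n' m' h' = D.auxA i n m h * D.L.Phi β (-(D.κ i)))
    (hB : ∀ j, D.L.Phi β (D.κ' j) ≠ 0 →
      D.auxB j n' m' h' = D.auxB j n m h * (D.L.Phi β (D.κ' j))⁻¹) :
    D.τ n' m' h' = D.W β n m h * D.τ n m h := by
  refine det_shift (D.M n m h) (D.M n' m' h') D.C (D.r n m h) (D.s n m h) _ hχ hI ?_
  intro i j
  obtain ⟨h1, h2, h3⟩ := D.L.phi_shift (D.xi n m h) β (D.κ i) (D.κ' j) (hg i j)
  rw [D.M_eq, D.M_eq, D.r_eq, D.s_eq, hxi, hA i h1, hB j h2]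
  linear_combination (D.auxA i n m h * D.auxB j n m h) * h3


end aux
/-- The τ-function obeys `τ̃ = W_δ τ`, `τ̂ = W_ε τ`, `τ̄ = W_λ τ`. -/
theorem tau_shift_relations {N N' : ℕ} (D : KPData N N')
    (hρ0 : ∀ i, D.ρ0 i ≠ 0) (hν0 : ∀ j, D.ν0 j ≠ 0)
    (hgen : D.Generic ![])
    (hInv : ∀ n m h : ℤ, IsUnit ((1 + D.M n m h * D.C).det))
    (hχδ : ∀ (n m h : ℤ) (j : Fin N'), D.L.chi D.del (D.κ' j) (D.xi n m h) ≠ 0)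
    (hχε : ∀ (n m h : ℤ) (j : Fin N'), D.L.chi D.eps (D.κ' j) (D.xi n m h) ≠ 0)
    (hχl : ∀ (n m h : ℤ) (j : Fin N'), D.L.chi D.lam (D.κ' j) (D.xi n m h) ≠ 0) :
    ∀ n m h : ℤ,
      D.τ (n + 1) m h = D.W D.del n m h * D.τ n m h ∧
      D.τ n (m + 1) h = D.W D.eps n m h * D.τ n m h ∧
      D.τ n m (h + 1) = D.W D.lam n m h * D.τ n m h := by
  intro n m h
  refine ⟨?_, ?_, ?_⟩
  · refine D.shift D.del n m h (n + 1) m h ?_ (hInv n m h) (hχδ n m h) ?_ ?_ ?_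
    · intro i j c0 cd ka kb hne
      have := D.gen_dir hgen n m h i j c0 cd 0 0 ka kb (by tauto)
      simpa using this
    · simp [KPData.xi]; ring
    · intro i h1
      simp only [KPData.auxA]
      rw [zpow_add_one₀ h1]; ring
    · intro j h1
      simp only [KPData.auxB]
      rw [neg_add, zpow_add₀ h1, _root_.zpow_neg_one]; ring
  · refine D.shift D.eps n m h n (m + 1) h ?_ (hInv n m h) (hχε n m h) ?_ ?_ ?_
    · intro i j c0 cd ka kb hne
      have := D.gen_dir hgen n m h i j c0 0 cd 0 ka kb (by tauto)
      simpa using this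
    · simp [KPData.xi]; ring
    · intro i h1
      simp only [KPData.auxA]
      rw [zpow_add_one₀ h1]; ring
    · intro j h1
      simp only [KPData.auxB]
      rw [neg_add, zpow_add₀ h1, _root_.zpow_neg_one]; ring
  · refine D.shift D.lam n m h n m (h + 1) ?_ (hInv n m h) (hχl n m h) ?_ ?_ ?_
    · intro i j c0 cd ka kb hne
      have := D.gen_dir hgen n m h i j c0 0 0 cd ka kb (by tauto)
      simpa using this
    · simp [KPData.xi]; ring
    · intro i h1
      simp only [KPData.auxA]
      rw [zpow_add_one₀ h1]; ring
    · intro j h1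
      simp only [KPData.auxB]
      rw [neg_add, zpow_add₀ h1, _root_.zpow_neg_one]; ring
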